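/- Let 0 < α < 1/2 and ε > 0 with 2α + ε < 1, let M = ⌈8/(1−2α)⌉ + 1, and let p = n^{α−1}. Then with high probability, a random complex Y drawn from Y(n,p) contains no inclusion-minimal Z/2 2-cycle whose number of faces f satisfies 2M − 2 ≤ f ≤ n^{2−2α−ε}. -/

import Mathlib

open scoped ENNReal

/-- The 3-element subsets of the vertex set `Fin n` (the possible faces). -/
abbrev Tri (n : ℕ) := {t : Finset (Fin n) // t.card = 3}

/-- The probability of the event `E` under the Linial–Meshulam measure `Y(n,p)`:
a complex is a configuration `ω : Tri n → Bool` recording which faces are present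
(the vertex set is `Fin n` and all edges are present), each face independently
present with probability `p`; the probability of `E` is the sum over configurations
in `E` of `∏ (p if the face is present, else 1-p)`. -/
noncomputable def lmProb (n : ℕ) (p : ℝ≥0∞) (E : Set (Tri n → Bool)) : ℝ≥0∞ :=
  ∑' ω : E, ∏ t : Tri n, (if (ω : Tri n → Bool) t then p else 1 - p)

/-- `y` is a filling of `τ` in the complex `ω`: a set of faces of `ω` such that a
2-element subset of the vertex set is contained in an odd number of members of `y`
exactly when it is a subset of `τ`. -/
def IsFilling (n : ℕ) (ω : Tri n → Bool) (τ : Finset (Fin n))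
    (y : Finset (Finset (Fin n))) : Prop :=
  (∀ t ∈ y, ∃ h : t.card = 3, ω ⟨t, h⟩ = true) ∧
  ∀ e : Finset (Fin n), e.card = 2 →
    (Odd ((y.filter (fun t => e ⊆ t)).card) ↔ e ⊆ τ)

/-- `fill n ω τ` is the filling area of `τ` in `ω`: the minimum cardinality of a
filling of `τ`, as an extended natural number (`⊤` if no filling exists). -/
noncomputable def fill (n : ℕ) (ω : Tri n → Bool) (τ : Finset (Fin n)) : ℕ∞ :=
  ⨅ y : {y : Finset (Finset (Fin n)) // IsFilling n ω τ y},
    ((y : Finset (Finset (Fin n))).card : ℕ∞)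

/-- A `Z/2` 2-cycle: a finite set `Z` of 3-element subsets of the vertex type `V`
such that every 2-element subset of `V` is contained in an even number of members of `Z`. -/
def IsTwoCycle {V : Type} [DecidableEq V] (Z : Finset (Finset V)) : Prop :=
  (∀ t ∈ Z, t.card = 3) ∧
  ∀ e : Finset V, e.card = 2 → Even ((Z.filter (fun t => e ⊆ t)).card)

/-- An inclusion-minimal (nontrivial) `Z/2` 2-cycle: a nonempty 2-cycle no nonempty
proper subset of which is a 2-cycle. -/
def IsMinCycle {V : Type} [DecidableEq V] (Z : Finset (Finset V)) : Prop :=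
  IsTwoCycle Z ∧ Z.Nonempty ∧ ∀ Z' ⊂ Z, Z'.Nonempty → ¬ IsTwoCycle Z'

/-!
A minimal 2-cycle `Z` on `n` vertices can be built one triangle at a time, each new triangle being
glued to an edge of the `Z/2` boundary of those already used: this boundary is nonempty until `Z` is
complete, since no proper part of `Z` is a cycle. So `Z` is the image of a triangulated polygon, and
it can be recovered from the shape of the triangulation and the closed walk along which the boundary
of the polygon runs. If `Z` has `f` faces, that walk has length `r = f + 2` and traverses every edge
an even number of times, because `Z` has no boundary.

There are few such walks. At each step the walk either traverses again one of the edges at the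
current vertex `w` traversed oddly often so far, of which there are about `2 * d`, or opens a new
edge. Giving each vertex `u` the weight `(d u)! / s ^ d u`, where `2 * d u` is about the number of
such edges at `u`, balances the two: with `s ^ 2 = n + r` each step costs a factor of at most
`3 * s`, so there are at most `n * (3 * s) ^ r` closed walks. As there are at most `4 ^ (f + 1)`
shapes, the expected number of minimal cycles with `f` faces in `Y(n, p)` is at most
`36 * n * s ^ 2 * (12 * s * p) ^ f`. For `p = n ^ (α - 1)` and `f ≤ n ^ β` with `β < 2 - 2 * α` the
base `12 * s * p` tends to `0` like a power of `n`, and the union bound over `f` applies.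
-/

open Finset Filter
open scoped symmDiff

section WalkParity

variable {V : Type*} [DecidableEq V] {G : SimpleGraph V} {u v w : V}

/-- The set of edges that a walk traverses an odd number of times: its `Z/2` class as a 1-chain. -/
def oddEdges (p : G.Walk u v) : Finset (Sym2 V) :=
  {e ∈ p.edges.toFinset | Odd (p.edges.count e)}

lemma mem_oddEdges {p : G.Walk u v} {e : Sym2 V} : e ∈ oddEdges p ↔ Odd (p.edges.count e) := by
  simp only [oddEdges, mem_filter, List.mem_toFinset, and_iff_right_iff_imp]
  exact fun h ↦ List.count_pos_iff.mp h.pos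

@[simp]
lemma oddEdges_nil : oddEdges (.nil : G.Walk u u) = ∅ := by
  simp [oddEdges]

lemma oddEdges_append (p : G.Walk u v) (q : G.Walk v w) :
    oddEdges (p.append q) = oddEdges p ∆ oddEdges q := by
  ext e
  simp only [mem_symmDiff, mem_oddEdges, SimpleGraph.Walk.edges_append, List.count_append,
    Nat.odd_add, ← Nat.not_odd_iff_even]
  tauto

lemma oddEdges_toWalk (h : G.Adj u v) : oddEdges h.toWalk = {s(u, v)} := by
  ext e
  by_cases he : s(u, v) = e
  · simp [mem_oddEdges, he]
  · simp [mem_oddEdges, he, Ne.symm he]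

lemma oddEdges_cons (h : G.Adj u v) (p : G.Walk v w) :
    oddEdges (.cons h p) = {s(u, v)} ∆ oddEdges p := by
  rw [← oddEdges_toWalk h, ← oddEdges_append]
  rfl

/-- The walks of length `r` from `v` to `w` whose set of odd edges is `B`. -/
def walksWithOddEdges (G : SimpleGraph V) [G.LocallyFinite] (r : ℕ) (v w : V)
    (B : Finset (Sym2 V)) : Finset (G.Walk v w) :=
  {p ∈ G.finsetWalkLength r v w | oddEdges p = B}

lemma mem_walksWithOddEdges [G.LocallyFinite] {r : ℕ} {B : Finset (Sym2 V)} {p : G.Walk v w} :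
    p ∈ walksWithOddEdges G r v w B ↔ p.length = r ∧ oddEdges p = B := by
  rw [walksWithOddEdges, mem_filter, SimpleGraph.mem_finsetWalkLength_iff]

lemma card_walksWithOddEdges_zero_le [G.LocallyFinite] (v w : V) (B : Finset (Sym2 V)) :
    #(walksWithOddEdges G 0 v w B) ≤ if B = ∅ then 1 else 0 := by
  have nil_of_mem {p : G.Walk v w} (hp : p ∈ walksWithOddEdges G 0 v w B) : p.Nil :=
    SimpleGraph.Walk.length_eq_zero_iff.mp (mem_walksWithOddEdges.mp hp).1
  split_ifs with hB
  · refine card_le_one.mpr fun p hp q hq ↦ ?_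
    obtain rfl := (nil_of_mem hp).eq
    rw [SimpleGraph.Walk.eq_nil_iff_nil.mpr (nil_of_mem hp),
      SimpleGraph.Walk.eq_nil_iff_nil.mpr (nil_of_mem hq)]
  · refine (card_eq_zero.mpr <| eq_empty_of_forall_notMem fun p hp ↦ hB ?_).le
    obtain rfl := (nil_of_mem hp).eq
    rw [← (mem_walksWithOddEdges.mp hp).2, SimpleGraph.Walk.eq_nil_iff_nil.mpr (nil_of_mem hp),
      oddEdges_nil]

lemma card_walksWithOddEdges_succ_le [G.LocallyFinite] (r : ℕ) (v w : V) (B : Finset (Sym2 V)) :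
    #(walksWithOddEdges G (r + 1) v w B) ≤
      ∑ x ∈ G.neighborFinset v, #(walksWithOddEdges G r x w ({s(v, x)} ∆ B)) := by
  rw [← card_sigma]
  refine card_le_card_of_forall_subsingleton
    (fun p q ↦ ∃ h : G.Adj v q.1, p = .cons h q.2) (fun p hp ↦ ?_) ?_
  · obtain ⟨hr, hB⟩ := mem_walksWithOddEdges.mp hp
    cases p with
    | nil => simp at hr
    | @cons _ x _ h q =>
      refine ⟨⟨x, q⟩, mem_sigma.mpr ⟨by simpa using h, mem_walksWithOddEdges.mpr ⟨?_, ?_⟩⟩, h, rfl⟩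
      · simpa using hr
      · rw [← hB, oddEdges_cons, symmDiff_symmDiff_cancel_left]
  · rintro q - p ⟨-, h, rfl⟩ p' ⟨-, h', rfl⟩
    rfl

end WalkParity

section WalkCounting

lemma singleton_symmDiff_of_mem {α : Type*} [DecidableEq α] {a : α} {s : Finset α} (h : a ∈ s) :
    {a} ∆ s = s.erase a := by
  rw [symmDiff_of_le (singleton_subset_iff.mpr h), sdiff_singleton_eq_erase]

lemma singleton_symmDiff_of_notMem {α : Type*} [DecidableEq α] {a : α} {s : Finset α}
    (h : a ∉ s) : {a} ∆ s = insert a s := by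
  rw [(disjoint_singleton_left.mpr h).symmDiff_eq_sup, sup_eq_union, insert_eq]

variable {V : Type*} [DecidableEq V]

/-- Half the degree of `u` in the graph `B` completed by a half-edge at `w`, rounded down. During a
walk `B` is the set of edges traversed oddly often so far and `w` is the current position, so the
half-edge is the one about to be traversed; each step then changes this number at one vertex only,
by one. -/
def halfDegree (B : Finset (Sym2 V)) (w u : V) : ℕ :=
  (#{e ∈ B | u ∈ e} + if u = w then 1 else 0) / 2

@[simp]
lemma halfDegree_empty (w : V) : halfDegree ∅ w = 0 := by
  ext u
  simp only [halfDegree, filter_empty, card_empty, Pi.zero_apply]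
  split_ifs <;> rfl

lemma halfDegree_insert {B : Finset (Sym2 V)} {w x : V} (hwx : w ≠ x) (hB : s(w, x) ∉ B) :
    halfDegree (insert s(w, x) B) x =
      Function.update (halfDegree B w) x (halfDegree B w x + 1) := by
  ext u
  have hcard : #{e ∈ insert s(w, x) B | u ∈ e} =
      #{e ∈ B | u ∈ e} + if u = w ∨ u = x then 1 else 0 := by
    simp only [filter_insert, Sym2.mem_iff]
    split_ifs
    · exact card_insert_of_notMem fun h ↦ hB (mem_filter.mp h).1
    · rfl
  obtain rfl | hux := eq_or_ne u x
  · simp [halfDegree, hcard, hwx.symm, Nat.add_assoc]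
  · simp [halfDegree, hcard, hux]

lemma card_incident_le_two_mul_halfDegree (B : Finset (Sym2 V)) (w : V) :
    #{e ∈ B | w ∈ e} ≤ 2 * halfDegree B w w := by
  simp only [halfDegree, if_true]
  omega

variable [Fintype V]

lemma sum_halfDegree_insert {B : Finset (Sym2 V)} {w x : V} (hwx : w ≠ x) (hB : s(w, x) ∉ B) :
    ∑ u, halfDegree (insert s(w, x) B) x u = ∑ u, halfDegree B w u + 1 := by
  rw [halfDegree_insert hwx hB, sum_update_of_mem (mem_univ x),
    ← sum_sdiff (subset_univ {x}), sum_singleton]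
  ring

/-- A potential bounding, up to a factor of `3 * s` per step, the number of ways to close up a walk
which is at `w` and whose odd edges so far are `B`. -/
noncomputable def walkPotential (s : ℝ) (B : Finset (Sym2 V)) (w : V) : ℝ :=
  ∏ u, ((halfDegree B w u).factorial : ℝ) / s ^ halfDegree B w u

lemma walkPotential_nonneg {s : ℝ} (hs : 0 ≤ s) (B : Finset (Sym2 V)) (w : V) :
    0 ≤ walkPotential s B w :=
  prod_nonneg fun _ _ ↦ by positivity

@[simp]
lemma walkPotential_empty (s : ℝ) (w : V) : walkPotential s ∅ w = 1 := by
  simp [walkPotential]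

lemma walkPotential_insert (s : ℝ) {B : Finset (Sym2 V)} {w x : V} (hwx : w ≠ x)
    (hB : s(w, x) ∉ B) :
    walkPotential s (insert s(w, x) B) x =
      walkPotential s B w * ((halfDegree B w x + 1) / s) := by
  set φ : ℕ → ℝ := fun k ↦ (k.factorial : ℝ) / s ^ k with hφ
  have hφ_succ (k : ℕ) : φ (k + 1) = (k + 1) / s * φ k := by
    simp only [hφ, Nat.factorial_succ, pow_succ']
    push_cast
    exact mul_div_mul_comm _ _ _ _
  change ∏ u, φ (halfDegree _ x u) = (∏ u, φ (halfDegree B w u)) * _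
  simp_rw [halfDegree_insert hwx hB, ← Function.comp_apply (f := φ), Function.comp_update]
  rw [prod_update_of_mem (mem_univ x), hφ_succ, ← prod_sdiff (subset_univ {x}), prod_singleton]
  simp only [Function.comp_apply]
  ring

variable {G : SimpleGraph V} [DecidableRel G.Adj]

lemma sum_walkPotential_open_le {s : ℝ} (hs : 0 < s) {B : Finset (Sym2 V)} {w : V}
    (h : (G.degree w + ∑ u, halfDegree B w u : ℕ) ≤ s ^ 2) :
    ∑ x ∈ G.neighborFinset w with s(w, x) ∉ B, walkPotential s ({s(w, x)} ∆ B) x ≤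
      s * walkPotential s B w := by
  have hterm : ∀ x ∈ G.neighborFinset w, s(w, x) ∉ B →
      walkPotential s ({s(w, x)} ∆ B) x = walkPotential s B w * ((halfDegree B w x + 1) / s) := by
    intro x hx hB
    rw [singleton_symmDiff_of_notMem hB,
      walkPotential_insert s (G.ne_of_adj (by simpa using hx)) hB]
  calc ∑ x ∈ G.neighborFinset w with s(w, x) ∉ B, walkPotential s ({s(w, x)} ∆ B) x
      = ∑ x ∈ G.neighborFinset w with s(w, x) ∉ B,
          walkPotential s B w * ((halfDegree B w x + 1) / s) :=
        sum_congr rfl fun x hx ↦ hterm x (mem_filter.mp hx).1 (mem_filter.mp hx).2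
    _ ≤ ∑ x ∈ G.neighborFinset w, walkPotential s B w * ((halfDegree B w x + 1) / s) :=
        sum_le_sum_of_subset_of_nonneg (filter_subset _ _) fun x _ _ ↦
          mul_nonneg (walkPotential_nonneg hs.le B w) (by positivity)
    _ = walkPotential s B w *
          ((∑ x ∈ G.neighborFinset w, (halfDegree B w x : ℝ) + G.degree w) / s) := by
        rw [← mul_sum, ← sum_div, sum_add_distrib, sum_const, nsmul_one,
          SimpleGraph.card_neighborFinset_eq_degree]
    _ ≤ walkPotential s B w * (s ^ 2 / s) := by
        have := walkPotential_nonneg hs.le B w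
        gcongr
        have : (∑ x ∈ G.neighborFinset w, halfDegree B w x : ℝ) ≤ ∑ x, (halfDegree B w x : ℝ) :=
          sum_le_univ_sum_of_nonneg fun x ↦ by positivity
        push_cast at h
        linarith
    _ = s * walkPotential s B w := by
        field_simp

lemma sum_walkPotential_close_le {s : ℝ} (hs : 0 < s) (B : Finset (Sym2 V)) (w : V) :
    ∑ x ∈ G.neighborFinset w with s(w, x) ∈ B, walkPotential s ({s(w, x)} ∆ B) x ≤
      2 * s * walkPotential s B w := by
  set d := halfDegree B w w with hd
  -- Closing the edge `wx` is the reverse of opening the edge `xw` from `x`.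
  have hterm : ∀ x ∈ G.neighborFinset w, s(w, x) ∈ B →
      walkPotential s ({s(w, x)} ∆ B) x = walkPotential s B w * s / d := by
    intro x hx hB
    have hxw : x ≠ w := (G.ne_of_adj (by simpa using hx)).symm
    rw [Sym2.eq_swap] at hB ⊢
    rw [singleton_symmDiff_of_mem hB]
    set B' := B.erase s(x, w)
    have hmem : s(x, w) ∉ B' := notMem_erase _ _
    have hins : insert s(x, w) B' = B := insert_erase hB
    have hdeg : d = halfDegree B' x w + 1 := by
      rw [hd, ← hins, halfDegree_insert hxw hmem, Function.update_self]
    rw [← hins, walkPotential_insert s hxw hmem, hdeg]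
    push_cast
    field_simp
  have hcard : #{x ∈ G.neighborFinset w | s(w, x) ∈ B} ≤ 2 * d :=
    (card_le_card_of_injOn (fun x ↦ s(w, x)) (fun x hx ↦ by simp_all)
      fun x _ y _ ↦ Sym2.congr_right.mp).trans (card_incident_le_two_mul_halfDegree B w)
  calc ∑ x ∈ G.neighborFinset w with s(w, x) ∈ B, walkPotential s ({s(w, x)} ∆ B) x
      = #{x ∈ G.neighborFinset w | s(w, x) ∈ B} * (walkPotential s B w * s / d) := by
        rw [← nsmul_eq_mul, ← sum_const]
        exact sum_congr rfl fun x hx ↦ hterm x (mem_filter.mp hx).1 (mem_filter.mp hx).2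
    _ ≤ (2 * d : ℕ) * (walkPotential s B w * s / d) := by
        have := walkPotential_nonneg hs.le B w
        gcongr
    _ ≤ 2 * s * walkPotential s B w := by
        rcases Nat.eq_zero_or_pos d with h0 | h0
        · have := walkPotential_nonneg hs.le B w
          rw [h0, Nat.mul_zero, Nat.cast_zero, zero_mul]
          positivity
        · push_cast
          field_simp
          rfl

lemma sum_walkPotential_le {s : ℝ} (hs : 0 < s) {B : Finset (Sym2 V)} {w : V}
    (h : (G.degree w + ∑ u, halfDegree B w u : ℕ) ≤ s ^ 2) :
    ∑ x ∈ G.neighborFinset w, walkPotential s ({s(w, x)} ∆ B) x ≤ 3 * s * walkPotential s B w := by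
  rw [← sum_filter_add_sum_filter_not _ (fun x ↦ s(w, x) ∈ B)]
  linarith [sum_walkPotential_close_le (G := G) hs B w, sum_walkPotential_open_le hs h]

lemma sum_halfDegree_symmDiff_le (B : Finset (Sym2 V)) {w x : V} (hwx : w ≠ x) :
    ∑ u, halfDegree ({s(w, x)} ∆ B) x u ≤ ∑ u, halfDegree B w u + 1 := by
  by_cases hB : s(w, x) ∈ B
  · have hopen : ∑ u, halfDegree B w u = ∑ u, halfDegree (B.erase s(x, w)) x u + 1 := by
      rw [← sum_halfDegree_insert hwx.symm (notMem_erase _ _), Sym2.eq_swap, insert_erase hB]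
    rw [singleton_symmDiff_of_mem hB, hopen, Sym2.eq_swap]
    omega
  · rw [singleton_symmDiff_of_notMem hB, sum_halfDegree_insert hwx hB]

theorem card_walksWithOddEdges_le {s : ℝ} (hs : 0 < s) (r : ℕ) (w x : V) (B : Finset (Sym2 V))
    (h : (G.maxDegree + ∑ u, halfDegree B w u + r : ℕ) ≤ s ^ 2) :
    #(walksWithOddEdges G r w x B) ≤ (3 * s) ^ r * walkPotential s B w := by
  induction r generalizing w B with
  | zero =>
    refine (Nat.cast_le.mpr (card_walksWithOddEdges_zero_le w x B)).trans ?_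
    split_ifs with hB
    · simp [hB]
    · simpa using walkPotential_nonneg hs.le B w
  | succ r ih =>
    calc (#(walksWithOddEdges G (r + 1) w x B) : ℝ)
        ≤ ∑ y ∈ G.neighborFinset w, (#(walksWithOddEdges G r y x ({s(w, y)} ∆ B)) : ℝ) :=
          mod_cast card_walksWithOddEdges_succ_le r w x B
      _ ≤ ∑ y ∈ G.neighborFinset w, (3 * s) ^ r * walkPotential s ({s(w, y)} ∆ B) y := by
          refine sum_le_sum fun y hy ↦ ih y _ (le_trans (Nat.cast_le.mpr ?_) h)
          have hwy : G.Adj w y := by simpa using hy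
          linarith [sum_halfDegree_symmDiff_le B hwy.ne]
      _ ≤ (3 * s) ^ r * (3 * s * walkPotential s B w) := by
          rw [← mul_sum]
          gcongr
          refine sum_walkPotential_le hs (le_trans (Nat.cast_le.mpr ?_) h)
          linarith [G.degree_le_maxDegree w]
      _ = (3 * s) ^ (r + 1) * walkPotential s B w := by ring

theorem card_walksWithOddEdges_empty_le (r : ℕ) (w x : V) :
    #(walksWithOddEdges G r w x ∅) ≤ (3 * √(G.maxDegree + r)) ^ r := by
  rcases Nat.eq_zero_or_pos r with rfl | hr
  · simpa using card_walksWithOddEdges_zero_le (G := G) w x ∅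
  · have hpos : (0 : ℝ) < G.maxDegree + r := by positivity
    simpa using card_walksWithOddEdges_le (G := G) (Real.sqrt_pos.mpr hpos) r w x ∅
      (by simp [Real.sq_sqrt hpos.le])

end WalkCounting

section TriangulatedPolygon

variable {V : Type*} {G : SimpleGraph V} {a b a' b' : V}

lemma endpoints_eq_of_support_eq {p : G.Walk a b} {q : G.Walk a' b'}
    (h : p.support = q.support) : a = a' ∧ b = b' := by
  refine ⟨?_, ?_⟩
  · rw [← p.head_support, ← q.head_support]
    simp only [h]
  · rw [← p.getLast_support, ← q.getLast_support]
    simp only [h]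

/-- A triangulated polygon mapped to the graph `G`, with a distinguished root edge mapped to `ab`.
It is either a degenerate polygon, consisting of its root edge only, or it is obtained by gluing two
smaller polygons along their root edges to two sides of a triangle `axb` whose third side is the new
root edge. Only the edges other than the root are required to be edges of `G`. -/
inductive TriangulatedPolygon (G : SimpleGraph V) : V → V → Type _
  | edge {a b : V} (h : G.Adj a b) : TriangulatedPolygon G a b
  | glue {a b : V} (x : V) (l : TriangulatedPolygon G a x) (r : TriangulatedPolygon G x b) :
      TriangulatedPolygon G a b

namespace TriangulatedPolygon

/-- The binary tree dual to the triangulation, with one node per triangle. -/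
def shape {a b : V} : TriangulatedPolygon G a b → BinaryTree Unit
  | edge _ => .nil
  | glue _ l r => .node () l.shape r.shape

/-- The walk around the polygon from one end of its root edge to the other, avoiding that edge. -/
def boundaryWalk {a b : V} : TriangulatedPolygon G a b → G.Walk a b
  | edge h => h.toWalk
  | glue _ l r => l.boundaryWalk.append r.boundaryWalk

/-- The images of the triangles of the polygon; the image of a degenerate triangle has fewer than
three vertices. -/
def faces [DecidableEq V] {a b : V} : TriangulatedPolygon G a b → Finset (Finset V)
  | edge _ => ∅
  | @glue _ _ a b x l r => insert {a, x, b} (l.faces ∪ r.faces)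

lemma length_boundaryWalk (T : TriangulatedPolygon G a b) :
    T.boundaryWalk.length = T.shape.numNodes + 1 := by
  induction T with
  | edge => rfl
  | glue x l r ihl ihr =>
    simp only [boundaryWalk, shape, SimpleGraph.Walk.length_append, BinaryTree.numNodes, ihl, ihr]
    omega

variable [DecidableEq V]

lemma faces_eq_of_shape_eq_of_support_eq {T : TriangulatedPolygon G a b}
    {T' : TriangulatedPolygon G a' b'} (hshape : T.shape = T'.shape)
    (hsupp : T.boundaryWalk.support = T'.boundaryWalk.support) : T.faces = T'.faces := by
  induction T generalizing a' b' with
  | edge =>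
    cases T' with
    | edge => rfl
    | glue => simp [shape] at hshape
  | @glue a b x l r ihl ihr =>
    cases T' with
    | edge => simp [shape] at hshape
    | glue x' l' r' =>
      simp only [shape, BinaryTree.node.injEq, true_and] at hshape
      have hlen : l.boundaryWalk.support.length = l'.boundaryWalk.support.length := by
        simp only [SimpleGraph.Walk.length_support, length_boundaryWalk, hshape.1]
      obtain ⟨rfl, rfl⟩ := endpoints_eq_of_support_eq hsupp
      have hl : l.boundaryWalk.support = l'.boundaryWalk.support := by
        simp only [boundaryWalk, SimpleGraph.Walk.support_append] at hsupp
        exact (List.append_inj hsupp hlen).1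
      have hr : r.boundaryWalk.support = r'.boundaryWalk.support := by
        simp only [boundaryWalk, SimpleGraph.Walk.support_append_eq_support_dropLast_append]
          at hsupp
        exact (List.append_inj hsupp (by simp [hlen])).2
      obtain rfl := (endpoints_eq_of_support_eq hr).1
      rw [faces, faces, ihl hshape.1 hl, ihr hshape.2 hr]

lemma exists_insert_triangle {T : TriangulatedPolygon G a b} {u v x : V}
    (he : s(u, v) ∈ T.boundaryWalk.edges) (hux : G.Adj u x) (hxv : G.Adj x v) :
    ∃ T' : TriangulatedPolygon G a b, T'.shape.numNodes = T.shape.numNodes + 1 ∧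
      oddEdges T'.boundaryWalk =
        oddEdges T.boundaryWalk ∆ ({s(u, v)} ∆ ({s(u, x)} ∆ {s(x, v)})) ∧
      T'.faces = insert {u, x, v} T.faces := by
  induction T with
  | @edge a b h =>
    have hodd : oddEdges (edge h).boundaryWalk = {s(u, v)} := by
      simpa [boundaryWalk, oddEdges_toWalk, eq_comm] using he
    rw [hodd, symmDiff_symmDiff_cancel_left]
    obtain ⟨rfl, rfl⟩ | ⟨rfl, rfl⟩ : u = a ∧ v = b ∨ u = b ∧ v = a := by
      simpa [boundaryWalk] using he
    · exact ⟨glue x (edge hux) (edge hxv), rfl,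
        by simp only [boundaryWalk, oddEdges_append, oddEdges_toWalk], rfl⟩
    · refine ⟨glue x (edge hxv.symm) (edge hux.symm), rfl, ?_, ?_⟩
      · simp only [boundaryWalk, oddEdges_append, oddEdges_toWalk, Sym2.eq_swap, symmDiff_comm]
      · have : ({v, x, u} : Finset V) = {u, x, v} := by ext; simp; tauto
        simp only [faces, this, union_empty]
  | glue y l r ihl ihr =>
    simp only [boundaryWalk, SimpleGraph.Walk.edges_append, List.mem_append] at he
    rcases he with he | he
    · obtain ⟨l', hn, hodd, hfaces⟩ := ihl he
      refine ⟨glue y l' r, ?_, ?_, ?_⟩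
      · simp only [shape, BinaryTree.numNodes, hn]
        omega
      · simp only [boundaryWalk, oddEdges_append, hodd, symmDiff_right_comm]
      · simp only [faces, hfaces, insert_union, insert_comm]
    · obtain ⟨r', hn, hodd, hfaces⟩ := ihr he
      refine ⟨glue y l r', ?_, ?_, ?_⟩
      · simp only [shape, BinaryTree.numNodes, hn]
        omega
      · simp only [boundaryWalk, oddEdges_append, hodd, symmDiff_assoc]
      · simp only [faces, hfaces, union_insert, insert_comm]

end TriangulatedPolygon

end TriangulatedPolygon

section EdgeBoundary

variable {V : Type*} [DecidableEq V]

/-- The `Z/2` boundary of a set of triangles: the pairs of distinct vertices lying in an odd number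
of them. -/
def edgeBoundary (A : Finset (Finset V)) : Finset (Sym2 V) :=
  {e ∈ A.biUnion Finset.sym2 | ¬e.IsDiag ∧ Odd #{t ∈ A | e ∈ t.sym2}}

lemma mem_edgeBoundary {A : Finset (Finset V)} {e : Sym2 V} :
    e ∈ edgeBoundary A ↔ ¬e.IsDiag ∧ Odd #{t ∈ A | e ∈ t.sym2} := by
  simp only [edgeBoundary, mem_filter, mem_biUnion, and_iff_right_iff_imp, and_imp]
  intro _ hodd
  simpa [Finset.Nonempty] using card_pos.mp hodd.pos

@[simp]
lemma edgeBoundary_empty : edgeBoundary (∅ : Finset (Finset V)) = ∅ := by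
  simp [edgeBoundary]

lemma edgeBoundary_union {A B : Finset (Finset V)} (h : Disjoint A B) :
    edgeBoundary (A ∪ B) = edgeBoundary A ∆ edgeBoundary B := by
  ext e
  simp only [mem_symmDiff, mem_edgeBoundary, filter_union,
    card_union_of_disjoint (disjoint_filter_filter h), Nat.odd_add, ← Nat.not_odd_iff_even]
  tauto

lemma edgeBoundary_insert {A : Finset (Finset V)} {t : Finset V} (ht : t ∉ A) :
    edgeBoundary (insert t A) = edgeBoundary A ∆ edgeBoundary {t} := by
  rw [insert_eq, edgeBoundary_union (disjoint_singleton_left.mpr ht), symmDiff_comm]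

lemma edgeBoundary_triangle {u v x : V} (huv : u ≠ v) (hux : u ≠ x) (hxv : x ≠ v) :
    edgeBoundary {{u, x, v}} = {s(u, v)} ∆ ({s(u, x)} ∆ {s(x, v)}) := by
  ext e
  induction e with | _ a b
  simp only [mem_edgeBoundary, filter_singleton, mk_mem_sym2_iff, mem_symmDiff, mem_singleton,
    Sym2.eq_iff, Sym2.mk_isDiag_iff, mem_insert]
  grind

lemma exists_eq_insert_insert_singleton_of_card_eq_three {t : Finset V} (ht : #t = 3) {u v : V}
    (huv : u ≠ v) (hu : u ∈ t) (hv : v ∈ t) : ∃ x, u ≠ x ∧ x ≠ v ∧ {u, x, v} = t := by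
  obtain ⟨x, hxt, hx⟩ : ∃ x ∈ t, x ∉ ({u, v} : Finset V) :=
    exists_mem_notMem_of_card_lt_card (by rw [card_pair huv, ht]; norm_num)
  simp only [mem_insert, mem_singleton, not_or] at hx
  refine ⟨x, Ne.symm hx.1, hx.2, eq_of_subset_of_card_le (by simp [insert_subset_iff, *]) ?_⟩
  rw [ht, card_eq_three.mpr ⟨u, x, v, Ne.symm hx.1, huv, hx.2, rfl⟩]

end EdgeBoundary

section MinimalCycles

variable {V : Type} [DecidableEq V] {Z A : Finset (Finset V)}

lemma isTwoCycle_iff_edgeBoundary_eq_empty :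
    IsTwoCycle Z ↔ (∀ t ∈ Z, #t = 3) ∧ edgeBoundary Z = ∅ := by
  refine and_congr_right fun _ ↦ ?_
  simp only [eq_empty_iff_forall_notMem, mem_edgeBoundary, Sym2.forall, card_eq_two,
    Sym2.mk_isDiag_iff, mk_mem_sym2_iff, not_and, Nat.not_odd_iff_even]
  refine ⟨fun h u v huv ↦ ?_, ?_⟩
  · simpa [insert_subset_iff] using h {u, v} ⟨u, v, huv, rfl⟩
  · rintro h _ ⟨u, v, huv, rfl⟩
    simpa [insert_subset_iff] using h u v huv

lemma IsMinCycle.exists_adjacent_triangle (hZ : IsMinCycle Z) (hAZ : A ⊂ Z) (hA : A.Nonempty) :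
    ∃ u v x, u ≠ v ∧ u ≠ x ∧ x ≠ v ∧ s(u, v) ∈ edgeBoundary A ∧ {u, x, v} ∈ Z \ A := by
  obtain ⟨hcard, hboundary⟩ := isTwoCycle_iff_edgeBoundary_eq_empty.mp hZ.1
  have hne : (edgeBoundary A).Nonempty := nonempty_iff_ne_empty.mpr fun h ↦ hZ.2.2 A hAZ hA <|
    isTwoCycle_iff_edgeBoundary_eq_empty.mpr ⟨fun t ht ↦ hcard t (hAZ.subset ht), h⟩
  obtain ⟨e, he⟩ := hne
  have he' : e ∈ edgeBoundary (Z \ A) := by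
    have hsum := edgeBoundary_union (disjoint_sdiff (s := A) (t := Z))
    rw [union_sdiff_of_subset hAZ.subset, hboundary, eq_comm, ← bot_eq_empty,
      symmDiff_eq_bot] at hsum
    rwa [← hsum]
  obtain ⟨hdiag, hodd⟩ := mem_edgeBoundary.mp he'
  obtain ⟨t, ht⟩ := card_pos.mp hodd.pos
  obtain ⟨htZ, het⟩ := mem_filter.mp ht
  induction e with | _ u v
  rw [mk_mem_sym2_iff] at het
  rw [Sym2.mk_isDiag_iff] at hdiag
  obtain ⟨x, hux, hxv, rfl⟩ := exists_eq_insert_insert_singleton_of_card_eq_three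
    (hcard t (mem_sdiff.mp htZ).1) hdiag het.1 het.2
  exact ⟨u, v, x, hdiag, hux, hxv, he, htZ⟩

/-- A closed polygon `T` develops a set `A` of triangles if the nondegenerate faces of `T` are the
members of `A`, each used once, and the boundary walk of `T` has the same `Z/2` boundary as `A`.
The endpoints of the root edge of `T` are identified, so the triangle at the root is degenerate:
it accounts for the extra node. -/
structure TriangulatedPolygon.Develops {V : Type*} [DecidableEq V] {a : V}
    (T : TriangulatedPolygon (⊤ : SimpleGraph V) a a) (A : Finset (Finset V)) : Prop where
  numNodes_eq : T.shape.numNodes = #A + 1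
  oddEdges_eq : oddEdges T.boundaryWalk = edgeBoundary A
  faces_eq : {t ∈ T.faces | #t = 3} = A

namespace TriangulatedPolygon

variable {V : Type*} [DecidableEq V] {A : Finset (Finset V)} {a u v x : V}

lemma Develops.exists_insert {T : TriangulatedPolygon (⊤ : SimpleGraph V) a a} (hT : T.Develops A)
    (huv : u ≠ v) (hux : u ≠ x) (hxv : x ≠ v) (he : s(u, v) ∈ T.boundaryWalk.edges)
    (ht : {u, x, v} ∉ A) :
    ∃ T' : TriangulatedPolygon (⊤ : SimpleGraph V) a a, T'.Develops (insert {u, x, v} A) := by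
  obtain ⟨T', hn, hodd, hfaces⟩ := exists_insert_triangle he hux hxv
  refine ⟨T', ?_, ?_, ?_⟩
  · rw [hn, hT.numNodes_eq, card_insert_of_notMem ht]
  · rw [hodd, hT.oddEdges_eq, edgeBoundary_insert ht, edgeBoundary_triangle huv hux hxv]
  · rw [hfaces, filter_insert, if_pos (card_eq_three.mpr ⟨u, x, v, hux, huv, hxv, rfl⟩),
      hT.faces_eq]

lemma develops_digon (huv : u ≠ v) :
    (glue v (edge huv) (edge huv.symm) : TriangulatedPolygon (⊤ : SimpleGraph V) u u).Develops
      ∅ := by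
  refine ⟨rfl, ?_, ?_⟩
  · rw [boundaryWalk, oddEdges_append, boundaryWalk, boundaryWalk, oddEdges_toWalk, oddEdges_toWalk,
      Sym2.eq_swap, symmDiff_self, edgeBoundary_empty, bot_eq_empty]
  · have : #{v, u} ≠ 3 := by simp [card_pair huv.symm]
    simp [faces, filter_singleton, this]

end TriangulatedPolygon

lemma IsMinCycle.exists_develops_of_card (hZ : IsMinCycle Z) {k : ℕ} (hk : 1 ≤ k) (hkZ : k ≤ #Z) :
    ∃ A ⊆ Z, #A = k ∧ ∃ a, ∃ T : TriangulatedPolygon (⊤ : SimpleGraph V) a a, T.Develops A := by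
  induction k, hk using Nat.le_induction with
  | base =>
    obtain ⟨t, ht⟩ := hZ.2.1
    obtain ⟨u, x, v, hux, huv, hxv, rfl⟩ := card_eq_three.mp (hZ.1.1 t ht)
    refine ⟨{{u, x, v}}, singleton_subset_iff.mpr ht, card_singleton _, u, ?_⟩
    exact (TriangulatedPolygon.develops_digon huv).exists_insert huv hux hxv
      (List.mem_cons_self ..) (notMem_empty _)
  | succ k hk ih =>
    obtain ⟨A, hAZ, rfl, a, T, hT⟩ := ih (Nat.le_of_succ_le hkZ)
    have hssub : A ⊂ Z := hAZ.ssubset_of_ne fun h ↦ by simp [h] at hkZ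
    obtain ⟨u, v, x, huv, hux, hxv, he, ht⟩ :=
      hZ.exists_adjacent_triangle hssub (card_pos.mp hk)
    obtain ⟨htZ, htA⟩ := mem_sdiff.mp ht
    rw [← hT.oddEdges_eq, mem_oddEdges] at he
    exact ⟨insert {u, x, v} A, insert_subset htZ hAZ, card_insert_of_notMem htA, a,
      hT.exists_insert huv hux hxv (List.count_pos_iff.mp he.pos) htA⟩

theorem IsMinCycle.exists_develops (hZ : IsMinCycle Z) :
    ∃ a, ∃ T : TriangulatedPolygon (⊤ : SimpleGraph V) a a, T.Develops Z := by
  obtain ⟨A, hAZ, hcard, h⟩ := hZ.exists_develops_of_card hZ.2.1.card_pos le_rfl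
  rwa [eq_of_subset_of_card_le hAZ hcard.ge] at h

open scoped Classical in
/-- The minimal cycles with `f` faces among the triangles on `V`. -/
noncomputable def minCycles (V : Type) [DecidableEq V] [Fintype V] (f : ℕ) :
    Finset (Finset (Finset V)) :=
  {Z | IsMinCycle Z ∧ #Z = f}

lemma mem_minCycles [Fintype V] {f : ℕ} : Z ∈ minCycles V f ↔ IsMinCycle Z ∧ #Z = f := by
  simp [minCycles]

lemma catalan_le_four_pow (n : ℕ) : catalan n ≤ 4 ^ n := by
  rw [catalan_eq_centralBinom_div]
  exact (Nat.div_le_self _ _).trans (Nat.centralBinom_le_four_pow n)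

theorem card_minCycles_le_sum_catalan_mul [Fintype V] (f : ℕ) :
    #(minCycles V f) ≤ ∑ a : V, catalan (f + 1) * #(walksWithOddEdges ⊤ (f + 2) a a ∅) := by
  simp_rw [← BinaryTree.treesOfNumNodesEq_card_eq_catalan, ← card_product, ← card_sigma]
  refine card_le_card_of_forall_subsingleton
    (fun Z q ↦ ∃ T : TriangulatedPolygon ⊤ q.1 q.1,
      T.Develops Z ∧ q.2 = (T.shape, T.boundaryWalk)) (fun Z hZf ↦ ?_) ?_
  · obtain ⟨hZ, rfl⟩ := mem_minCycles.mp hZf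
    obtain ⟨a, T, hT⟩ := hZ.exists_develops
    refine ⟨⟨a, T.shape, T.boundaryWalk⟩, ?_, T, hT, rfl⟩
    simp only [mem_sigma, mem_univ, mem_product, BinaryTree.mem_treesOfNumNodesEq,
      mem_walksWithOddEdges, T.length_boundaryWalk, hT.numNodes_eq, hT.oddEdges_eq,
      (isTwoCycle_iff_edgeBoundary_eq_empty.mp hZ.1).2, and_self]
  · rintro ⟨a, s, p⟩ - Z ⟨-, T, hT, hsp⟩ Z' ⟨-, T', hT', hsp'⟩
    obtain ⟨hshape, hwalk⟩ := Prod.ext_iff.mp (hsp.symm.trans hsp')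
    rw [← hT.faces_eq, ← hT'.faces_eq,
      TriangulatedPolygon.faces_eq_of_shape_eq_of_support_eq hshape (congrArg _ hwalk)]

theorem card_minCycles_le [Fintype V] (f : ℕ) :
    #(minCycles V f) ≤ 36 * Fintype.card V * (Fintype.card V + f + 2 : ℝ) *
      (12 * √(Fintype.card V + f + 2)) ^ f := by
  set n := Fintype.card V
  set s := √(n + f + 2 : ℝ) with hs
  have hwalks (a : V) : #(walksWithOddEdges ⊤ (f + 2) a a ∅) ≤ (3 * s) ^ (f + 2) := by
    refine (card_walksWithOddEdges_empty_le (f + 2) a a).trans ?_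
    have : (⊤ : SimpleGraph V).maxDegree ≤ n := by
      rw [SimpleGraph.maxDegree_top]
      exact Nat.sub_le _ _
    rw [hs, add_assoc]
    gcongr
    simp
  calc (#(minCycles V f) : ℝ)
      ≤ ∑ a : V, (catalan (f + 1) : ℝ) * #(walksWithOddEdges ⊤ (f + 2) a a ∅) :=
        mod_cast card_minCycles_le_sum_catalan_mul f
    _ ≤ ∑ _a : V, 4 ^ (f + 1) * (3 * s) ^ (f + 2) := by
        gcongr with a
        · exact mod_cast catalan_le_four_pow _
        · exact hwalks a
    _ = 36 * n * s ^ 2 * (12 * s) ^ f := by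
        rw [sum_const, card_univ, nsmul_eq_mul, show (12 : ℝ) * s = 4 * (3 * s) by ring,
          mul_pow 4]
        ring
    _ = 36 * n * (n + f + 2) * (12 * s) ^ f := by
        rw [Real.sq_sqrt (by positivity)]

end MinimalCycles

section RandomComplex

open MeasureTheory ProbabilityTheory unitInterval

/-- The Linial–Meshulam measure as a product of Bernoulli measures. -/
noncomputable def linialMeshulam (n : ℕ) (p : I) : Measure (Tri n → Bool) :=
  Measure.pi fun _ ↦ bernoulliMeasure true false p

instance (n : ℕ) (p : I) : IsProbabilityMeasure (linialMeshulam n p) := by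
  unfold linialMeshulam
  infer_instance

lemma lmProb_toNNReal_eq_linialMeshulam (n : ℕ) (p : I) (E : Set (Tri n → Bool)) :
    lmProb n (toNNReal p) E = linialMeshulam n p E := by
  rw [lmProb, tsum_subtype E fun ω ↦ ∏ t, (if ω t then (toNNReal p : ℝ≥0∞) else 1 - toNNReal p),
    ← Measure.tsum_indicator_apply_singleton _ E .of_discrete]
  refine tsum_congr fun ω ↦ congrArg (E.indicator · ω) (funext fun ω ↦ ?_)
  rw [linialMeshulam, Measure.pi_singleton]
  refine prod_congr rfl fun t _ ↦ ?_
  cases ω t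
  · have : (1 : ℝ≥0∞) = toNNReal (σ p) + toNNReal p := by
      rw [← ENNReal.coe_add, toNNReal_symm_add_toNNReal, ENNReal.coe_one]
    simpa using ENNReal.sub_eq_of_eq_add ENNReal.coe_ne_top this
  · simp

variable {n : ℕ}

/-- The complexes of which every member of `Z` is a face. -/
def complexesContaining (Z : Finset (Finset (Fin n))) : Set (Tri n → Bool) :=
  {ω | ∀ t ∈ Z, ∃ h : #t = 3, ω ⟨t, h⟩ = true}

lemma linialMeshulam_real_complexesContaining (p : I) {Z : Finset (Finset (Fin n))}
    (hZ : ∀ t ∈ Z, #t = 3) : (linialMeshulam n p).real (complexesContaining Z) = p ^ #Z := by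
  have hpi : complexesContaining Z =
      (Z.subtype (#· = 3) : Set (Tri n)).pi fun _ ↦ {true} := by
    ext ω
    simp only [complexesContaining, Set.mem_ofPred_eq, Set.mem_pi, mem_coe, mem_subtype,
      Set.mem_singleton_iff, Subtype.forall]
    exact ⟨fun h t _ ht ↦ (h t ht).2, fun h t ht ↦ ⟨hZ t ht, h t (hZ t ht) ht⟩⟩
  rw [hpi, measureReal_def, linialMeshulam, Measure.pi_pi_finset, prod_const, card_subtype,
    filter_true_of_mem hZ]
  simp

theorem linialMeshulam_real_exists_minCycle_le (p : I) (F : Finset ℕ) :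
    (linialMeshulam n p).real {ω | ∃ Z, ω ∈ complexesContaining Z ∧ IsMinCycle Z ∧ #Z ∈ F} ≤
      ∑ f ∈ F, #(minCycles (Fin n) f) * (p : ℝ) ^ f := by
  have hunion : {ω | ∃ Z, ω ∈ complexesContaining Z ∧ IsMinCycle Z ∧ #Z ∈ F} =
      ⋃ f ∈ F, ⋃ Z ∈ minCycles (Fin n) f, complexesContaining Z := by
    ext ω
    simp only [Set.mem_ofPred_eq, Set.mem_iUnion, mem_minCycles]
    grind
  rw [hunion]
  refine (measureReal_biUnion_finset_le _ _).trans (sum_le_sum fun f _ ↦ ?_)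
  refine (measureReal_biUnion_finset_le _ _).trans_eq ?_
  rw [← nsmul_eq_mul, ← sum_const]
  refine sum_congr rfl fun Z hZ ↦ ?_
  obtain ⟨hmin, rfl⟩ := mem_minCycles.mp hZ
  exact linialMeshulam_real_complexesContaining p hmin.1.1

end RandomComplex

section Asymptotics

open Topology

/-- An upper bound for the expected number of minimal cycles with `f` faces in a random complex on
`n` vertices with face probability `p`. -/
noncomputable def expectedMinCyclesBound (n : ℕ) (p : ℝ) (f : ℕ) : ℝ :=
  36 * n * (n + f + 2) * (12 * √(n + f + 2) * p) ^ f

lemma expectedMinCyclesBound_nonneg (n : ℕ) {p : ℝ} (hp : 0 ≤ p) (f : ℕ) :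
    0 ≤ expectedMinCyclesBound n p f := by
  unfold expectedMinCyclesBound
  positivity

lemma sum_Ico_expectedMinCyclesBound_le {n m M : ℕ} {p x : ℝ} (hp : 0 ≤ p) (hx : 0 ≤ x)
    (hM : n + M + 1 ≤ 4 * x ^ 2) (hxp : 24 * (x * p) ≤ 1 / 2) :
    ∑ f ∈ Ico m M, expectedMinCyclesBound n p f ≤ 288 * n * x ^ 2 * (24 * (x * p)) ^ m := by
  set q := 24 * (x * p) with hq
  have hq0 : 0 ≤ q := by positivity
  have hterm : ∀ f ∈ Ico m M, expectedMinCyclesBound n p f ≤ 36 * n * (4 * x ^ 2) * q ^ f := by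
    intro f hf
    have hfM : (f : ℝ) + 1 ≤ M := mod_cast (mem_Ico.mp hf).2
    have hsq : (n + f + 2 : ℝ) ≤ 4 * x ^ 2 := by linarith
    have hsqrt : √(n + f + 2 : ℝ) ≤ 2 * x := by
      rw [Real.sqrt_le_left (by positivity)]
      linarith
    calc expectedMinCyclesBound n p f
        ≤ 36 * n * (4 * x ^ 2) * (12 * (2 * x) * p) ^ f := by
          unfold expectedMinCyclesBound
          gcongr
      _ = 36 * n * (4 * x ^ 2) * q ^ f := by
          rw [hq]
          ring
  calc ∑ f ∈ Ico m M, expectedMinCyclesBound n p f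
      ≤ 36 * n * (4 * x ^ 2) * ∑ f ∈ Ico m M, q ^ f := by
        rw [mul_sum]
        exact sum_le_sum hterm
    _ ≤ 36 * n * (4 * x ^ 2) * (q ^ m / (1 - 1 / 2)) := by
        have hgeom := geom_sum_Ico_le_of_lt_one (m := m) (n := M) hq0 (by linarith)
        gcongr
        refine hgeom.trans ?_
        gcongr
    _ = 288 * n * x ^ 2 * q ^ m := by ring

variable {α γ : ℝ}

lemma tendsto_mul_natCast_rpow_of_neg (c : ℝ) {a : ℝ} (ha : a < 0) :
    Tendsto (fun n : ℕ ↦ c * (n : ℝ) ^ a) atTop (𝓝 0) := by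
  have := (tendsto_rpow_neg_atTop (neg_pos.mpr ha)).comp tendsto_natCast_atTop_atTop
  simpa [Function.comp_def] using this.const_mul c

lemma eventually_mul_natCast_rpow_le_half (hγ : γ < 2 - 2 * α) :
    ∀ᶠ n : ℕ in atTop, 24 * (n : ℝ) ^ (γ / 2 + α - 1) ≤ 1 / 2 :=
  (tendsto_mul_natCast_rpow_of_neg 24 (by linarith)).eventually_le_const (by norm_num)

lemma eventually_sum_Ico_expectedMinCyclesBound_le (hγ₁ : 1 ≤ γ) (hγ : γ < 2 - 2 * α) :
    ∀ᶠ n : ℕ in atTop, ∀ m M : ℕ, (M : ℝ) ≤ n ^ γ + 1 →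
      ∑ f ∈ Ico m M, expectedMinCyclesBound n (n ^ (α - 1)) f ≤
        288 * (n : ℝ) ^ (1 + γ) * (24 * (n : ℝ) ^ (γ / 2 + α - 1)) ^ m := by
  filter_upwards [eventually_mul_natCast_rpow_le_half hγ, eventually_ge_atTop 1]
    with n hhalf hn m M hM
  have hn' : (1 : ℝ) ≤ n := mod_cast hn
  have hn0 : (0 : ℝ) < n := by linarith
  have hx : ((n : ℝ) ^ (γ / 2)) ^ 2 = n ^ γ := by
    rw [← Real.rpow_mul_natCast hn0.le]
    norm_num
  have hxp : (n : ℝ) ^ (γ / 2) * n ^ (α - 1) = n ^ (γ / 2 + α - 1) := by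
    rw [← Real.rpow_add hn0, add_sub_assoc]
  have hle : (n : ℝ) ≤ n ^ γ := Real.self_le_rpow_of_one_le hn' hγ₁
  rw [← hxp, Real.rpow_add hn0, Real.rpow_one, ← hx, ← mul_assoc 288]
  exact sum_Ico_expectedMinCyclesBound_le (by positivity) (by positivity)
    (by rw [hx]; linarith) (hxp ▸ hhalf)

lemma tendsto_sum_Ico_expectedMinCyclesBound_of_lt (hα : α < 1 / 2) {k : ℕ}
    (hk : 4 / (1 - 2 * α) < k) :
    Tendsto (fun n : ℕ ↦ ∑ f ∈ Ico k n, expectedMinCyclesBound n (n ^ (α - 1)) f) atTop (𝓝 0) := by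
  rw [div_lt_iff₀ (by linarith)] at hk
  refine squeeze_zero'
    (.of_forall fun n ↦ sum_nonneg fun f _ ↦ expectedMinCyclesBound_nonneg n (by positivity) f)
    ?_ (tendsto_mul_natCast_rpow_of_neg (288 * 24 ^ k)
      (show 2 + (1 / 2 + α - 1) * k < 0 by linarith))
  filter_upwards [eventually_sum_Ico_expectedMinCyclesBound_le le_rfl
    (show 1 < 2 - 2 * α by linarith), eventually_gt_atTop 0] with n hsum hn
  refine (hsum k n (by simp)).trans_eq ?_
  have hn0 : (0 : ℝ) < n := mod_cast hn
  rw [Real.rpow_add hn0 2, Real.rpow_mul_natCast hn0.le, mul_pow]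
  norm_num
  ring

lemma tendsto_sum_Ico_expectedMinCyclesBound_of_ge (hγ₁ : 1 ≤ γ) (hγ : γ < 2 - 2 * α) :
    Tendsto (fun n : ℕ ↦ ∑ f ∈ Ico n (⌊(n : ℝ) ^ γ⌋₊ + 1),
      expectedMinCyclesBound n (n ^ (α - 1)) f) atTop (𝓝 0) := by
  have hexp : Tendsto (fun n : ℕ ↦ 288 * ((n : ℝ) ^ (1 + γ) * Real.exp (-Real.log 2 * n)))
      atTop (𝓝 0) := by
    simpa using ((tendsto_rpow_mul_exp_neg_mul_atTop_nhds_zero (1 + γ) (Real.log 2)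
      (Real.log_pos one_lt_two)).comp tendsto_natCast_atTop_atTop).const_mul 288
  refine squeeze_zero'
    (.of_forall fun n ↦ sum_nonneg fun f _ ↦ expectedMinCyclesBound_nonneg n (by positivity) f)
    ?_ hexp
  filter_upwards [eventually_sum_Ico_expectedMinCyclesBound_le hγ₁ hγ,
    eventually_mul_natCast_rpow_le_half hγ] with n hsum hhalf
  have hexp_eq : Real.exp (-Real.log 2 * n) = (1 / 2) ^ n := by
    rw [mul_comm, Real.exp_nat_mul, Real.exp_neg, Real.exp_log two_pos, one_div]
  rw [hexp_eq, ← mul_assoc]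
  refine (hsum n _ ?_).trans (by gcongr)
  push_cast
  gcongr
  exact Nat.floor_le (by positivity)

theorem tendsto_sum_Ico_expectedMinCyclesBound (hα : α < 1 / 2) (hγ₁ : 1 ≤ γ)
    (hγ : γ < 2 - 2 * α) {k : ℕ} (hk : 4 / (1 - 2 * α) < k) :
    Tendsto (fun n : ℕ ↦ ∑ f ∈ Ico k (⌊(n : ℝ) ^ γ⌋₊ + 1),
      expectedMinCyclesBound n (n ^ (α - 1)) f) atTop (𝓝 0) := by
  have hadd := (tendsto_sum_Ico_expectedMinCyclesBound_of_lt hα hk).add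
    (tendsto_sum_Ico_expectedMinCyclesBound_of_ge hγ₁ hγ)
  rw [add_zero] at hadd
  refine hadd.congr' ?_
  filter_upwards [eventually_ge_atTop (max k 1)] with n hn
  refine sum_Ico_consecutive _ (le_of_max_le_left hn) (Nat.le_succ_of_le (Nat.le_floor ?_))
  exact Real.self_le_rpow_of_one_le (mod_cast le_of_max_le_right hn) hγ₁

end Asymptotics

section HighProbability

open MeasureTheory Topology unitInterval

lemma linialMeshulam_real_exists_minCycle_le_expectedMinCyclesBound (n : ℕ) (p : I)
    (F : Finset ℕ) :
    (linialMeshulam n p).real {ω | ∃ Z, ω ∈ complexesContaining Z ∧ IsMinCycle Z ∧ #Z ∈ F} ≤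
      ∑ f ∈ F, expectedMinCyclesBound n p f := by
  refine (linialMeshulam_real_exists_minCycle_le p F).trans (sum_le_sum fun f _ ↦ ?_)
  have hp : (0 : ℝ) ≤ p := p.2.1
  rw [expectedMinCyclesBound, mul_pow _ (p : ℝ), ← mul_assoc]
  gcongr
  simpa using card_minCycles_le (V := Fin n) f

lemma exists_toNNReal_eq_natCast_rpow {n : ℕ} (hn : 1 ≤ n) {a : ℝ} (ha : a ≤ 0) :
    ∃ p : I, (p : ℝ) = (n : ℝ) ^ a ∧ (toNNReal p : ℝ≥0∞) = (n : ℝ≥0∞) ^ a := by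
  have hn' : (1 : ℝ) ≤ n := mod_cast hn
  refine ⟨⟨(n : ℝ) ^ a, by positivity, Real.rpow_le_one_of_one_le_of_nonpos hn' ha⟩, rfl, ?_⟩
  rw [← ENNReal.ofReal_natCast, ENNReal.ofReal_rpow_of_pos (by linarith), ENNReal.ofReal,
    Real.toNNReal_of_nonneg (by positivity)]
  rfl

lemma lmProb_natCast_rpow_le_one {n : ℕ} (hn : 1 ≤ n) {a : ℝ} (ha : a ≤ 0)
    (E : Set (Tri n → Bool)) : lmProb n (n ^ a) E ≤ 1 := by
  obtain ⟨p, -, hp⟩ := exists_toNNReal_eq_natCast_rpow hn ha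
  rw [← hp, lmProb_toNNReal_eq_linialMeshulam]
  exact prob_le_one

lemma ofReal_one_sub_le_lmProb_natCast_rpow {n : ℕ} (hn : 1 ≤ n) {a : ℝ} (ha : a ≤ 0)
    (F : Finset ℕ) {E : Set (Tri n → Bool)}
    (hE : ∀ ω ∉ E, ∃ Z, ω ∈ complexesContaining Z ∧ IsMinCycle Z ∧ #Z ∈ F) :
    ENNReal.ofReal (1 - ∑ f ∈ F, expectedMinCyclesBound n (n ^ a) f) ≤ lmProb n (n ^ a) E := by
  obtain ⟨p, hp, hp'⟩ := exists_toNNReal_eq_natCast_rpow hn ha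
  rw [← hp, ← hp', lmProb_toNNReal_eq_linialMeshulam, ← ofReal_measureReal]
  have hcompl : (linialMeshulam n p).real Eᶜ ≤ ∑ f ∈ F, expectedMinCyclesBound n p f :=
    (measureReal_mono hE).trans
      (linialMeshulam_real_exists_minCycle_le_expectedMinCyclesBound n p F)
  rw [probReal_compl_eq_one_sub .of_discrete] at hcompl
  gcongr
  linarith

theorem no_intermediate_or_large_cycles_whp_general {α β : ℝ} (hα : α < 1 / 2)
    (hβ : β < 2 - 2 * α) {k : ℕ} (hk : 4 / (1 - 2 * α) < k) :
    Tendsto (fun n : ℕ ↦ lmProb n ((n : ℝ≥0∞) ^ (α - 1))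
      {ω | ¬ ∃ Z, ω ∈ complexesContaining Z ∧ IsMinCycle Z ∧ k ≤ #Z ∧ (#Z : ℝ) ≤ n ^ β})
      atTop (𝓝 1) := by
  have hα' : α - 1 ≤ 0 := by linarith
  have hγ : max 1 β < 2 - 2 * α := max_lt (by linarith) hβ
  have hlower : Tendsto (fun n : ℕ ↦ ENNReal.ofReal
      (1 - ∑ f ∈ Ico k (⌊(n : ℝ) ^ max 1 β⌋₊ + 1), expectedMinCyclesBound n (n ^ (α - 1)) f))
      atTop (𝓝 1) := by
    simpa using ENNReal.tendsto_ofReal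
      ((tendsto_sum_Ico_expectedMinCyclesBound hα (le_max_left 1 β) hγ hk).const_sub 1)
  refine tendsto_of_tendsto_of_tendsto_of_le_of_le' hlower tendsto_const_nhds ?_
    ((eventually_ge_atTop 1).mono fun n hn ↦ lmProb_natCast_rpow_le_one hn hα' _)
  filter_upwards [eventually_ge_atTop 1] with n hn
  refine ofReal_one_sub_le_lmProb_natCast_rpow hn hα' _ fun ω hω ↦ ?_
  obtain ⟨Z, hZω, hZ, hkZ, hZβ⟩ := not_not.mp hω
  have hβγ : (n : ℝ) ^ β ≤ n ^ max 1 β :=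
    Real.rpow_le_rpow_of_exponent_le (mod_cast hn) (le_max_right 1 β)
  exact ⟨Z, hZω, hZ, mem_Ico.mpr ⟨hkZ, Nat.lt_succ_of_le (Nat.le_floor (hZβ.trans hβγ))⟩⟩

lemma four_div_lt_two_mul_ceil_eight_div {x : ℝ} (hx : 0 < x) :
    4 / x < (2 * (⌈8 / x⌉₊ + 1) - 2 : ℕ) := by
  have hceil : 8 / x ≤ ⌈8 / x⌉₊ := Nat.le_ceil _
  have hpos : 0 < 4 / x := by positivity
  have hdouble : 8 / x = 2 * (4 / x) := by ring
  rw [Nat.mul_add_one, Nat.add_sub_cancel]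
  push_cast
  linarith

end HighProbability

/-- **Lemma (no intermediate or large cycles).**
Let `0 < α < 1/2`, `ε > 0` with `2α + ε < 1`, `M = ⌈8/(1-2α)⌉ + 1`, and `p = n^(α-1)`.
Then with high probability `Y ∼ Y(n,p)` contains no inclusion-minimal `Z/2` 2-cycle
whose number of faces `f` satisfies `2M - 2 ≤ f ≤ n^(2-2α-ε)`. -/
theorem no_intermediate_or_large_cycles_whp (α ε : ℝ)
    (hα0 : 0 < α) (hα : α < 1 / 2) (hε : 0 < ε) (hαε : 2 * α + ε < 1) :
    Filter.Tendsto (fun n : ℕ =>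
      lmProb n ((n : ℝ≥0∞) ^ (α - 1))
        {ω | ¬ ∃ Z : Finset (Finset (Fin n)),
          (∀ t ∈ Z, ∃ h : t.card = 3, ω ⟨t, h⟩ = true) ∧
          IsMinCycle Z ∧
          2 * (⌈(8 : ℝ) / (1 - 2 * α)⌉₊ + 1) - 2 ≤ Z.card ∧
          (Z.card : ℝ) ≤ (n : ℝ) ^ (2 - 2 * α - ε)})
      Filter.atTop (nhds 1) := by
  exact no_intermediate_or_large_cycles_whp_general hα (by linarith)
    (four_div_lt_two_mul_ceil_eight_div (by linarith))
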